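/- arXiv:1903.06114 — 2 statements merged into one kernel-verified Lean document; each statement's English description precedes it below -/
import Mathlib

section
/- Let p ≥ 1 and let m ≥ 1 be an odd integer. Let L be the language over the alphabet {0,…,2^p−1} consisting of all words w (leading zeros allowed) such that val_{2^p}(w) ∈ m·T, where T is the Thue–Morse set. Then the set of left quotients {w⁻¹L : w a word over {0,…,2^p−1}} has exactly 2m elements; that is, the state complexity of m·T with respect to the base 2^p equals 2m. -/
/-- The parity (in `ZMod 2`) of the number of 1s in the binary expansion of `n`. -/
def sTM (n : ℕ) : ZMod 2 := ((Nat.digits 2 n).count 1 : ZMod 2)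

/-- The Thue–Morse set: natural numbers with an even number of 1s in base 2. -/
def ThueMorse : Set ℕ := {n | sTM n = 0}

/-- The value of a word over `{0,…,b-1}` (most significant digit first) in base `b`. -/
def valb (b : ℕ) (w : List (Fin b)) : ℕ := w.foldl (fun a d => b * a + d.val) 0

/-- The left quotient of a language by a word. -/
def leftQuot {α : Type*} (L : Set (List α)) (w : List α) : Set (List α) := {u | w ++ u ∈ L}

theorem aux_s_zero : sTM 0 = 0 := by simp [sTM]

theorem aux_s_even (n : ℕ) : sTM (2 * n) = sTM n := by
  rcases Nat.eq_zero_or_pos n with rfl | h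
  · rfl
  · have := Nat.digits_def' (b := 2) (by norm_num) (show 0 < 2 * n by omega)
    simp [sTM, this]

theorem aux_s_odd (n : ℕ) : sTM (2 * n + 1) = sTM n + 1 := by
  have := Nat.digits_def' (b := 2) (by norm_num) (show 0 < 2 * n + 1 by omega)
  have h1 : (2 * n + 1) % 2 = 1 := by omega
  have h2 : (2 * n + 1) / 2 = n := by omega
  rw [h1, h2] at this
  unfold sTM
  rw [this, List.count_cons_self]
  push_cast
  rfl

theorem aux_s_add (k : ℕ) : ∀ q t : ℕ, t < 2 ^ k → sTM (2 ^ k * q + t) = sTM q + sTM t := by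
  induction k with
  | zero =>
    intro q t ht
    have : t = 0 := by simpa using ht
    subst this
    simp [aux_s_zero]
  | succ k ih =>
    intro q t ht
    rw [pow_succ] at ht ⊢
    obtain ⟨j, rfl | rfl⟩ := Nat.even_or_odd' t
    · have : 2 ^ k * 2 * q + 2 * j = 2 * (2 ^ k * q + j) := by ring
      rw [this, aux_s_even, aux_s_even, ih q j (by omega)]
    · have : 2 ^ k * 2 * q + (2 * j + 1) = 2 * (2 ^ k * q + j) + 1 := by ring
      rw [this, aux_s_odd, aux_s_odd, ih q j (by omega), add_assoc]

theorem aux_val_snoc (b : ℕ) (w : List (Fin b)) (d : Fin b) :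
    valb b (w ++ [d]) = b * valb b w + d.val := by
  simp [valb]

theorem aux_val_append (b : ℕ) (w u : List (Fin b)) :
    valb b (w ++ u) = b ^ u.length * valb b w + valb b u := by
  induction u using List.reverseRecOn with
  | nil => simp [valb]
  | append_singleton u d ih =>
    rw [← List.append_assoc, aux_val_snoc, aux_val_snoc, ih]
    simp only [List.length_append, List.length_singleton, pow_succ]
    ring

theorem aux_val_lt (b : ℕ) (u : List (Fin b)) : valb b u < b ^ u.length := by
  induction u using List.reverseRecOn with
  | nil => simp [valb]
  | append_singleton u d ih =>
    rw [aux_val_snoc]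
    simp only [List.length_append, List.length_singleton, pow_succ]
    have := d.isLt
    nlinarith

theorem aux_val_surj (b : ℕ) (hb : 0 < b) (l : ℕ) :
    ∀ e : ℕ, e < b ^ l → ∃ u : List (Fin b), u.length = l ∧ valb b u = e := by
  induction l with
  | zero =>
    intro e he
    refine ⟨[], rfl, ?_⟩
    have : e = 0 := by simpa using he
    simp [valb, this]
  | succ l ih =>
    intro e he
    obtain ⟨u, hu, hv⟩ := ih (e / b) (by
      rw [Nat.div_lt_iff_lt_mul hb]; rwa [pow_succ] at he)
    refine ⟨u ++ [⟨e % b, Nat.mod_lt _ hb⟩], by simp [hu], ?_⟩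
    rw [aux_val_snoc, hv]
    exact Nat.div_add_mod e b

def auxQ (p m r : ℕ) (a : ZMod 2) : Set (List (Fin (2 ^ p))) :=
  {u | ∃ t, (2 ^ p) ^ u.length * r + valb (2 ^ p) u = m * t ∧ sTM t = a}

theorem aux_zmod2 (a b : ZMod 2) : a + b = 0 ↔ b = a := by
  revert a b; decide

theorem aux_quot (p m : ℕ) (hm : 1 ≤ m) (w : List (Fin (2 ^ p))) (q r : ℕ) (hr : r < m)
    (hw : valb (2 ^ p) w = m * q + r) :
    leftQuot {w | ∃ t ∈ ThueMorse, valb (2 ^ p) w = m * t} w = auxQ p m r (sTM q) := by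
  ext u
  simp only [leftQuot, auxQ, Set.mem_ofPred_eq, ThueMorse, aux_val_append, hw]
  have hu := aux_val_lt _ u
  rw [← pow_mul] at hu ⊢
  set B := 2 ^ (p * u.length) with hB
  have key : ∀ t, B * r + valb (2 ^ p) u = m * t → sTM (B * q + t) = sTM q + sTM t := by
    intro t ht
    apply aux_s_add
    rw [← hB]
    have : m * t < m * B := by nlinarith
    exact lt_of_mul_lt_mul_left this (Nat.zero_le _)
  constructor
  · rintro ⟨t, ht, h⟩
    have hq : B * q ≤ t := by
      have : m * (B * q) ≤ m * t := by nlinarith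
      exact le_of_mul_le_mul_left this hm
    obtain ⟨t', rfl⟩ := Nat.exists_eq_add_of_le hq
    have h' : B * r + valb (2 ^ p) u = m * t' := by nlinarith
    refine ⟨t', h', ?_⟩
    rw [key t' h', aux_zmod2] at ht
    exact ht
  · rintro ⟨t, h, ht⟩
    refine ⟨B * q + t, ?_, ?_⟩
    · rw [key t h, aux_zmod2]
      exact ht
    · nlinarith

theorem aux_nonempty (p m : ℕ) (hp : 1 ≤ p) (hm : 1 ≤ m) (r : ℕ) (a : ZMod 2) :
    (auxQ p m r a).Nonempty := by
  obtain ⟨l, hl⟩ : ∃ l, 4 * m < (2 ^ p) ^ l :=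
    pow_unbounded_of_one_lt _ (Nat.one_lt_two_pow (by omega))
  set B := (2 ^ p) ^ l with hB
  have hd := Nat.div_add_mod (B * r) (2 * m)
  have hlt := Nat.mod_lt (B * r) (show 0 < 2 * m by omega)
  set k := B * r / (2 * m) with hk
  have : ∃ t, (t = 2 * (k + 1) ∨ t = 2 * (k + 1) + 1) ∧ sTM t = a := by
    have h2 : ∀ x y : ZMod 2, x = y ∨ x + 1 = y := by decide
    rcases h2 (sTM (k + 1)) a with h | h
    · exact ⟨_, Or.inl rfl, by rw [aux_s_even, h]⟩
    · exact ⟨_, Or.inr rfl, by rw [aux_s_odd, h]⟩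
  obtain ⟨t, ht, hs⟩ := this
  have hle : B * r ≤ m * t ∧ m * t < B * r + B := by
    rcases ht with rfl | rfl <;> constructor <;> nlinarith [Nat.zero_le (B * r % (2 * m))]
  obtain ⟨u, hu, hv⟩ := aux_val_surj (2 ^ p) (by positivity) l (m * t - B * r) (by omega)
  refine ⟨u, t, ?_, hs⟩
  rw [hu, hv, ← hB]
  omega

theorem aux_inj (p m : ℕ) (hm : 1 ≤ m) (hmodd : Odd m) (r r' : ℕ) (hr : r < m) (hr' : r' < m)
    (a a' : ZMod 2) (u : List (Fin (2 ^ p))) (h : u ∈ auxQ p m r a) (h' : u ∈ auxQ p m r' a') :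
    r = r' ∧ a = a' := by
  obtain ⟨t, h1, rfl⟩ := h
  obtain ⟨t', h2, rfl⟩ := h'
  have hc : Nat.gcd m ((2 ^ p) ^ u.length) = 1 :=
    (((Nat.coprime_two_right.mpr hmodd).pow_right p).pow_right u.length)
  have e1 : (2 ^ p) ^ u.length * r + valb (2 ^ p) u ≡
      (2 ^ p) ^ u.length * r' + valb (2 ^ p) u [MOD m] := by
    rw [h1, h2]
    simp [Nat.ModEq]
  have e2 := Nat.ModEq.cancel_left_of_coprime hc (Nat.ModEq.add_right_cancel' _ e1)
  have e3 : r = r' := Nat.ModEq.eq_of_lt_of_lt e2 hr hr'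
  subst e3
  refine ⟨rfl, ?_⟩
  rw [h1] at h2
  rw [Nat.eq_of_mul_eq_mul_left hm h2]

theorem state_complexity_of_mT_odd (p m : ℕ) (hp : 1 ≤ p) (hm : 1 ≤ m) (hmodd : Odd m)
    (L : Set (List (Fin (2 ^ p))))
    (hL : L = {w | ∃ t ∈ ThueMorse, valb (2 ^ p) w = m * t}) :
    {Q | ∃ w : List (Fin (2 ^ p)), Q = leftQuot L w}.ncard = 2 * m := by
  subst hL
  have hset : {Q | ∃ w : List (Fin (2 ^ p)),
      Q = leftQuot {w | ∃ t ∈ ThueMorse, valb (2 ^ p) w = m * t} w} =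
      Set.range (fun x : Fin m × ZMod 2 => auxQ p m x.1 x.2) := by
    ext Q
    constructor
    · rintro ⟨w, rfl⟩
      refine ⟨(⟨valb (2 ^ p) w % m, Nat.mod_lt _ hm⟩, sTM (valb (2 ^ p) w / m)), ?_⟩
      exact (aux_quot p m hm w _ _ (Nat.mod_lt _ hm) (Nat.div_add_mod _ _).symm).symm
    · rintro ⟨⟨r, a⟩, rfl⟩
      obtain ⟨q, hq⟩ : ∃ q, sTM q = a := by
        have h2 : ∀ y : ZMod 2, 0 = y ∨ 0 + 1 = y := by decide
        rcases h2 a with h | h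
        · exact ⟨0, by rw [aux_s_zero, h]⟩
        · exact ⟨2 * 0 + 1, by rw [aux_s_odd, aux_s_zero, h]⟩
      obtain ⟨l, hl⟩ : ∃ l, m * q + r < (2 ^ p) ^ l :=
        pow_unbounded_of_one_lt _ (Nat.one_lt_two_pow (by omega))
      obtain ⟨w, -, hw⟩ := aux_val_surj (2 ^ p) (by positivity) l _ hl
      refine ⟨w, ?_⟩
      rw [aux_quot p m hm w q r r.isLt hw, hq]
  have hinj : Function.Injective (fun x : Fin m × ZMod 2 => auxQ p m x.1 x.2) := by
    rintro ⟨r, a⟩ ⟨r', a'⟩ h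
    obtain ⟨u, hu⟩ := aux_nonempty p m hp hm r a
    have hu' : u ∈ auxQ p m r' a' := by
      have h : auxQ p m r a = auxQ p m r' a' := h
      rwa [← h]
    obtain ⟨h1, h2⟩ := aux_inj p m hm hmodd r r' r.isLt r'.isLt a a' u hu hu'
    exact Prod.ext (Fin.ext h1) h2
  rw [hset, ← Set.image_univ, Set.ncard_image_of_injective _ hinj, Set.ncard_univ]
  simp [Nat.card_prod, mul_comm]
end

section
/- Let p ≥ 1 and m = k·2^z with k odd and z ≥ 1. Let β ∈ [0, ⌈z/p⌉ − 2] and c ∈ [1, p−1]. Then for all n ∈ ℕ and all e < 2^{pn}: [m divides 2^{pn}·k·2^{z−βp−1} + e and s((2^{pn}·k·2^{z−βp−1} + e)/m) = 1] if and only if [m divides 2^{pn}·k·2^{z−(βp+c)−1} + e and s((2^{pn}·k·2^{z−(βp+c)−1} + e)/m) = 1]. [This shows that the states (k·2^{z−βp−1}, B) and (k·2^{z−(βp+c)−1}, B) of the projected automaton accept the same language, so all states of the class Γ_β are indistinguishable.] -/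
lemma sTM_rec (n : ℕ) : sTM n = sTM (n / 2) + (if n % 2 = 1 then 1 else 0) := by
  rcases Nat.eq_zero_or_pos n with h | h
  · subst h; simp
  · unfold sTM
    rw [Nat.digits_def' (by norm_num) h, List.count_cons]
    rcases Nat.mod_two_eq_zero_or_one n with h2 | h2 <;> simp [h2]

lemma sTM_add (t : ℕ) : ∀ q, q < 2 ^ t → sTM (2 ^ t + q) = sTM q + 1 := by
  induction t with
  | zero =>
    intro q hq
    have : q = 0 := by simpa using hq
    subst this
    simp [sTM]
  | succ t ih =>
    intro q hq
    rw [pow_succ] at *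
    rw [sTM_rec (2 ^ t * 2 + q), sTM_rec q]
    have h1 : (2 ^ t * 2 + q) / 2 = 2 ^ t + q / 2 := by omega
    have h2 : (2 ^ t * 2 + q) % 2 = q % 2 := by omega
    rw [h1, h2, ih (q / 2) (by omega)]
    ring

lemma case_small (k z j N e : ℕ) (hk : 0 < k) (hj : j + 1 ≤ z) (hN : N ≤ j)
    (he : e < 2 ^ N) : ¬ (k * 2 ^ z ∣ 2 ^ N * (k * 2 ^ (z - j - 1)) + e) := by
  intro h
  have hpos : 0 < 2 ^ N * (k * 2 ^ (z - j - 1)) + e := by positivity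
  have hle := Nat.le_of_dvd hpos h
  have e1 : 2 ^ N * (k * 2 ^ (z - j - 1)) = k * 2 ^ (N + (z - j - 1)) := by
    rw [pow_add]; ring
  have e2 : 2 ^ (N + (z - j - 1)) ≤ 2 ^ (z - 1) := Nat.pow_le_pow_right (by norm_num) (by omega)
  have e3 : 2 ^ N ≤ 2 ^ (z - 1) := Nat.pow_le_pow_right (by norm_num) (by omega)
  have e4 : 2 ^ z = 2 ^ (z - 1) * 2 := by
    rw [← pow_succ]; congr 1; omega
  rw [e1, e4] at hle
  have e5 := Nat.mul_le_mul_left k e2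
  have e6 : 1 * 2 ^ (z - 1) ≤ k * 2 ^ (z - 1) := Nat.mul_le_mul_right _ hk
  have e7 : k * (2 ^ (z - 1) * 2) = k * 2 ^ (z - 1) + k * 2 ^ (z - 1) := by ring
  omega

lemma case_big (k z j N e : ℕ) (hk : 0 < k) (hj : j + 1 ≤ z) (hN : j + 1 ≤ N)
    (he : e < 2 ^ N) : (k * 2 ^ z ∣ 2 ^ N * (k * 2 ^ (z - j - 1)) + e ∧
      sTM ((2 ^ N * (k * 2 ^ (z - j - 1)) + e) / (k * 2 ^ z)) = 1) ↔
      (k * 2 ^ z ∣ e ∧ sTM (e / (k * 2 ^ z)) + 1 = 1) := by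
  have hm : 0 < k * 2 ^ z := by positivity
  have e1 : 2 ^ N * (k * 2 ^ (z - j - 1)) = k * 2 ^ z * 2 ^ (N - j - 1) := by
    have : 2 ^ N * 2 ^ (z - j - 1) = 2 ^ z * 2 ^ (N - j - 1) := by
      rw [← pow_add, ← pow_add]; congr 1; omega
    calc _ = k * (2 ^ N * 2 ^ (z - j - 1)) := by ring
      _ = _ := by rw [this]; ring
  have hlt : e / (k * 2 ^ z) < 2 ^ (N - j - 1) := by
    rw [Nat.div_lt_iff_lt_mul hm]
    calc e < 2 ^ N := he
      _ ≤ 2 ^ ((N - j - 1) + z) := Nat.pow_le_pow_right (by norm_num) (by omega)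
      _ = 2 ^ (N - j - 1) * (1 * 2 ^ z) := by rw [pow_add]; ring
      _ ≤ _ := Nat.mul_le_mul_left _ (Nat.mul_le_mul_right _ hk)
  rw [e1, Nat.mul_add_div hm, sTM_add _ _ hlt, Nat.dvd_add_right (Dvd.intro _ rfl)]

theorem gamma_beta_indistinguishable (p m k z : ℕ) (hp : 1 ≤ p) (hkodd : Odd k) (hz : 1 ≤ z)
    (hm : m = k * 2 ^ z)
    (β : ℕ) (hβ : β + 2 ≤ (z + p - 1) / p)
    (c : ℕ) (hc1 : 1 ≤ c) (hc2 : c ≤ p - 1) :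
    ∀ n e : ℕ, e < 2 ^ (p * n) →
      ((m ∣ 2 ^ (p * n) * (k * 2 ^ (z - β * p - 1)) + e ∧
          sTM ((2 ^ (p * n) * (k * 2 ^ (z - β * p - 1)) + e) / m) = 1) ↔
       (m ∣ 2 ^ (p * n) * (k * 2 ^ (z - (β * p + c) - 1)) + e ∧
          sTM ((2 ^ (p * n) * (k * 2 ^ (z - (β * p + c) - 1)) + e) / m) = 1)) := by
  intro n e he
  subst hm
  have hk := hkodd.pos
  rw [Nat.le_div_iff_mul_le hp] at hβ
  have h1 : (β + 2) * p = β * p + p + p := by ring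
  rcases Nat.lt_or_ge β n with h | h
  · have h2 : p * (β + 1) ≤ p * n := Nat.mul_le_mul_left _ h
    have h3 : p * (β + 1) = β * p + p := by ring
    rw [case_big k z (β * p) _ e hk (by omega) (by omega) he,
      case_big k z (β * p + c) _ e hk (by omega) (by omega) he]
  · have h2 : p * n ≤ p * β := Nat.mul_le_mul_left _ h
    have h3 : p * β = β * p := by ring
    have a := case_small k z (β * p) _ e hk (by omega) (by omega) he
    have b := case_small k z (β * p + c) _ e hk (by omega) (by omega) he
    tauto
end
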